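/- Let θ : ℝ → ℝ be smooth, let R ∈ (0,∞), assume Hypothesis (H_R) holds, and assume θ(t) ≤ 0 for all t ∈ ℝ. Then for every x ∈ ℝ there exists a nonnegative Borel measure μ_x on ℝ with support contained in [−π/R, π/R] such that for every integer n ≥ 1, 𝒮_n^{θ,g_R}(x) = n! · ∫ t^{n−1} dμ_x(t). -/

import Mathlib

noncomputable section

/-- `g_R(t) = -(R/π)·log(1 - (π/R)·t)`. -/
def gR (R t : ℝ) : ℝ := -(R / Real.pi) * Real.log (1 - (Real.pi / R) * t)

/-- `f` is a (smooth) solution of `f'' + θ·f = 0`. -/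
def IsSolution (θ f : ℝ → ℝ) : Prop :=
  ContDiff ℝ (⊤ : ℕ∞) f ∧ ∀ t, deriv (deriv f) t + θ t * f t = 0

/-- `f₁, f₂` is the fundamental pair of solutions of `f'' + θ·f = 0` at `x`:
`f₁(x) = f₂'(x) = 1`, `f₂(x) = f₁'(x) = 0`. -/
def IsFundPair (θ : ℝ → ℝ) (x : ℝ) (f₁ f₂ : ℝ → ℝ) : Prop :=
  IsSolution θ f₁ ∧ IsSolution θ f₂ ∧
  f₁ x = 1 ∧ deriv f₁ x = 0 ∧ f₂ x = 0 ∧ deriv f₂ x = 1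

/-- The `n`-th `g_R`-Schwarzian `𝒮_n^{θ,g_R}(x)`, computed from the fundamental pair
`f₁, f₂` at `x`: the `n`-th derivative at `t = 0` of `t ↦ h_x(x + g_R(t))`,
where `h_x = f₂/f₁`. -/
def SchR (R x : ℝ) (f₁ f₂ : ℝ → ℝ) (n : ℕ) : ℝ :=
  iteratedDeriv n (fun t => f₂ (x + gR R t) / f₁ (x + gR R t)) 0

/-- The determinant `𝒟_n^{θ,g_R}(x)` of the `n×n` Hankel matrix with `(i,j)` entry
`𝒮_{i+j-1}^{θ,g_R}(x)/(i+j-1)!`. -/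
def DetR (R x : ℝ) (f₁ f₂ : ℝ → ℝ) (n : ℕ) : ℝ :=
  (Matrix.of fun i j : Fin n =>
    SchR R x f₁ f₂ (i.1 + j.1 + 1) / (Nat.factorial (i.1 + j.1 + 1) : ℝ)).det

/-- Hypothesis (H_R): `f₁, f₂` are linearly independent solutions of `f'' + θ·f = 0`
(constant Wronskian `W = f₁f₂' - f₁'f₂ ≠ 0`) and `h = f₂/f₁` admits a meromorphic
extension `H` to the strip `{|Im z| < R}` (holomorphic off the real zeros of `f₁`,
with poles at those zeros) which satisfies `W·Im H(z)·Im z > 0` for `0 < Im z < R`. -/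
def HypR (θ : ℝ → ℝ) (R : ℝ) : Prop :=
  ∃ (f₁ f₂ : ℝ → ℝ) (H : ℂ → ℂ),
    IsSolution θ f₁ ∧ IsSolution θ f₂ ∧
    f₁ 0 * deriv f₂ 0 - deriv f₁ 0 * f₂ 0 ≠ 0 ∧
    (∀ t : ℝ, f₁ t ≠ 0 → H t = ((f₂ t / f₁ t : ℝ) : ℂ)) ∧
    DifferentiableOn ℂ H
      {z : ℂ | |z.im| < R ∧ ∀ t : ℝ, f₁ t = 0 → z ≠ (t : ℂ)} ∧
    (∀ t : ℝ, f₁ t = 0 →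
      Filter.Tendsto (fun z => ‖H z‖) (nhdsWithin (t : ℂ) {(t : ℂ)}ᶜ) Filter.atTop) ∧
    (∀ z : ℂ, 0 < z.im → z.im < R →
      0 < (f₁ 0 * deriv f₂ 0 - deriv f₁ 0 * f₂ 0) * (H z).im * z.im)

/-- `(i,j)` entry (1-based, clamped to ℕ) of the matrix `T(f,n)(t)`:
`f^{(j-i)}(t)/(j-i)!` if `i ≤ j`, and `0` otherwise. -/
def Tentry (f : ℝ → ℝ) (t : ℝ) (i j : ℕ) : ℝ :=
  if i ≤ j then iteratedDeriv (j - i) f t / (Nat.factorial (j - i) : ℝ) else 0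

end

section Helpers

open MeasureTheory Filter Topology

lemma exists_measure_of_tendsto_moments (ρ : ℝ) (hρ : 0 < ρ) (d : ℕ → ℝ → ℝ)
    (hd : ∀ j, Continuous (d j)) (hd0 : ∀ j t, 0 ≤ d j t) (a : ℕ → ℝ)
    (ha : ∀ k, Tendsto (fun j => ∫ t in (-ρ)..ρ, t ^ k * d j t) atTop (𝓝 (a k))) :
    ∃ μ : Measure ℝ, IsFiniteMeasure μ ∧ μ (Set.Icc (-ρ) ρ)ᶜ = 0 ∧
      ∀ k, ∫ t, t ^ k ∂μ = a k := by
  let K : Set ℝ := Set.Icc (-ρ) ρ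
  have hK : MeasurableSet K := measurableSet_Icc
  let m : ℕ → Measure K := fun j =>
    Measure.comap Subtype.val (volume.withDensity (fun t => ENNReal.ofReal (d j t)))
  have hintegral : ∀ j (f : ℝ → ℝ), ∫ x : K, f x ∂(m j) = ∫ t in (-ρ)..ρ, f t * d j t := by
    intro j f
    rw [integral_subtype_comap hK f, restrict_withDensity hK,
      integral_withDensity_eq_integral_toReal_smul (by have := hd j; fun_prop) (by simp),
      intervalIntegral.integral_of_le (by linarith), integral_Icc_eq_integral_Ioc]
    refine integral_congr_ae (Eventually.of_forall fun t => ?_)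
    simp [ENNReal.toReal_ofReal (hd0 j t), mul_comm]
  have hfin : ∀ j, IsFiniteMeasure (m j) := by
    intro j
    constructor
    rw [Measure.comap_apply _ Subtype.val_injective
      (fun s hs => hK.subtype_image hs) _ MeasurableSet.univ]
    simp only [Set.image_univ, Subtype.range_coe_subtype, Set.ofPred_mem_eq]
    rw [withDensity_apply _ hK]
    exact ((hd j).continuousOn.integrableOn_compact isCompact_Icc).lintegral_lt_top
  let ν : ℕ → FiniteMeasure K := fun j => ⟨m j, hfin j⟩
  obtain ⟨C, hC⟩ := (ha 0).bddAbove_range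
  have hmass : ∀ j, (ν j).mass ≤ C.toNNReal := by
    intro j
    have h1 := hintegral j (fun _ => 1)
    have h2 : ∫ t in (-ρ)..ρ, t ^ 0 * d j t ≤ C := hC ⟨j, rfl⟩
    simp only [pow_zero] at h2
    rw [← h1] at h2
    simp only [integral_const, smul_eq_mul, mul_one] at h2
    rw [← NNReal.coe_le_coe]
    exact le_trans h2 (Real.le_coe_toNNReal C)
  have hcomp := isCompact_setOfPred_finiteMeasure_le_of_compactSpace K C.toNNReal
  let U : Ultrafilter ℕ := Filter.hyperfilter ℕ
  have hU : (U : Filter ℕ) ≤ atTop := Nat.hyperfilter_le_atTop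
  obtain ⟨μ, -, hμ⟩ := hcomp.ultrafilter_le_nhds (U.map ν)
    (by
      rw [le_principal_iff]
      exact Filter.mem_map.2 (Filter.univ_mem' hmass))
  have hμ' : Tendsto ν (U : Filter ℕ) (𝓝 μ) := hμ
  rw [FiniteMeasure.tendsto_iff_forall_integral_tendsto] at hμ'
  refine ⟨(μ : Measure K).map Subtype.val, inferInstance, ?_, ?_⟩
  · rw [Measure.map_apply measurable_subtype_coe hK.compl]
    convert measure_empty (μ := (μ : Measure K))
    ext x
    simp
  · intro k
    rw [integral_map measurable_subtype_coe.aemeasurable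
      (continuous_pow k).aestronglyMeasurable]
    let f : BoundedContinuousFunction K ℝ :=
      BoundedContinuousFunction.mkOfCompact ⟨fun x => (x : ℝ) ^ k, by fun_prop⟩
    have h1 := hμ' f
    have h2 : Tendsto (fun j => ∫ x, f x ∂(ν j : Measure K)) (U : Filter ℕ) (𝓝 (a k)) := by
      refine ((ha k).mono_left hU).congr fun j => ?_
      exact (hintegral j (fun t => t ^ k)).symm
    exact tendsto_nhds_unique h1 h2

lemma support_of_moments_bound (μ : Measure ℝ) [IsFiniteMeasure μ] (ρ b : ℝ) (hb : 0 < b)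
    (hμ : μ (Set.Icc (-ρ) ρ)ᶜ = 0)
    (h : ∀ c, b < c → ∃ C : ℝ, ∀ k : ℕ, |∫ t, t ^ k ∂μ| ≤ C * c ^ k) :
    μ (Set.Icc (-b) b)ᶜ = 0 := by
  have key : ∀ e, b < e → μ {t | e ≤ |t|} = 0 := by
    intro e he
    obtain ⟨c, hbc, hce⟩ := exists_between he
    obtain ⟨C, hC⟩ := h c hbc
    have hc0 : 0 < c := hb.trans hbc
    have he0 : 0 < e := hb.trans he
    have hI : ∀ k : ℕ, Integrable (fun t : ℝ => t ^ k) μ := by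
      intro k
      have : μ = μ.restrict (Set.Icc (-ρ) ρ) := (Measure.restrict_eq_self_of_ae_mem hμ).symm
      rw [this]
      exact (continuous_pow k).continuousOn.integrableOn_compact isCompact_Icc
    have hb1 : ∀ n : ℕ, μ.real {t | e ≤ |t|} ≤ C * ((c / e) ^ 2) ^ n := by
      intro n
      have hm := mul_meas_ge_le_integral_of_nonneg (μ := μ) (f := fun t : ℝ => t ^ (2 * n))
        (Eventually.of_forall fun t => by simp only [pow_mul]; positivity) (hI _) (e ^ (2 * n))
      have hsub : {t : ℝ | e ≤ |t|} ⊆ {t : ℝ | e ^ (2 * n) ≤ t ^ (2 * n)} := by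
        intro t ht
        simp only [Set.mem_ofPred_eq] at ht ⊢
        have : t ^ (2 * n) = |t| ^ (2 * n) := by simp [pow_mul]
        rw [this]
        gcongr
      have h3 : μ.real {t | e ≤ |t|} ≤ μ.real {t : ℝ | e ^ (2 * n) ≤ t ^ (2 * n)} :=
        measureReal_mono hsub
      have h4 : e ^ (2 * n) * μ.real {t | e ≤ |t|} ≤ C * c ^ (2 * n) :=
        (mul_le_mul_of_nonneg_left h3 (by positivity)).trans
          (hm.trans ((le_abs_self _).trans (hC _)))
      rw [← pow_mul, div_pow, mul_div_assoc', le_div_iff₀ (by positivity)]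
      linarith
    have hlim : Tendsto (fun n : ℕ => C * ((c / e) ^ 2) ^ n) atTop (𝓝 (C * 0)) := by
      refine (tendsto_pow_atTop_nhds_zero_of_lt_one (by positivity) ?_).const_mul C
      have : c / e < 1 := (div_lt_one he0).2 hce
      exact pow_lt_one₀ (by positivity) this (by norm_num)
    have h0 : μ.real {t | e ≤ |t|} ≤ 0 := by
      have := ge_of_tendsto' hlim hb1
      simpa using this
    have := le_antisymm h0 measureReal_nonneg
    rwa [measureReal_eq_zero_iff] at this
  have hU : (Set.Icc (-b) b)ᶜ ⊆ ⋃ n : ℕ, {t : ℝ | b + 1 / ((n : ℝ) + 1) ≤ |t|} := by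
    intro t ht
    have ht' : b < |t| := by
      by_contra hcon
      exact ht (abs_le.1 (not_lt.1 hcon))
    obtain ⟨n, hn⟩ := exists_nat_one_div_lt (sub_pos.2 ht')
    exact Set.mem_iUnion.2 ⟨n, by simp only [Set.mem_ofPred_eq]; linarith⟩
  refine measure_mono_null hU (measure_iUnion_null fun n => key _ ?_)
  have : 0 < 1 / ((n : ℝ) + 1) := by positivity
  linarith

lemma half_circle_integral (f : ℂ → ℂ) (ε ρ : ℝ) (hε : 0 < ε) (hρ : 0 < ρ)
    (hf : ∀ z : ℂ, z.im < ε → DifferentiableAt ℂ f z) :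
    ∫ t in (-ρ)..ρ, f (t : ℂ) =
      ∫ φ in (-Real.pi)..0, f (circleMap 0 ρ φ) * (circleMap 0 ρ φ * Complex.I) := by
  set N : ℝ := ρ ^ 2 / ε with hN
  have hN0 : 0 < N := by positivity
  have hNε : N * ε = ρ ^ 2 := by rw [hN]; field_simp
  have hball : ∀ z ∈ Metric.ball (-(N : ℂ) * Complex.I) (N + ε), z.im < ε := by
    intro z hz
    rw [Metric.mem_ball, dist_eq_norm] at hz
    have := (Complex.abs_im_le_norm _).trans_lt hz
    have := (le_abs_self _).trans_lt this
    simp at this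
    linarith
  have hmem : ∀ z : ℂ, ‖z‖ ≤ ρ → z.im ≤ 0 → z ∈ Metric.ball (-(N : ℂ) * Complex.I) (N + ε) := by
    intro z hz hz'
    rw [Metric.mem_ball, dist_eq_norm]
    refine lt_of_pow_lt_pow_left₀ 2 (by positivity) ?_
    have h1 : ‖z‖ ^ 2 ≤ ρ ^ 2 := by gcongr
    rw [Complex.sq_norm, Complex.normSq_apply] at h1 ⊢
    simp
    nlinarith [sq_nonneg ε]
  obtain ⟨P, hP⟩ := DifferentiableOn.isExactOn_ball (f := f) (c := -(N : ℂ) * Complex.I)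
    (r := N + ε) (fun z hz => (hf z (hball z hz)).differentiableWithinAt)
  have hfc : ContinuousOn f {z : ℂ | z.im < ε} := fun z hz =>
    (hf z hz).continuousAt.continuousWithinAt
  have him : ∀ φ ∈ Set.uIcc (-Real.pi) 0, (circleMap 0 ρ φ).im ≤ 0 := by
    intro φ hφ
    rw [Set.uIcc_of_le (by linarith [Real.pi_pos])] at hφ
    have : Real.sin φ ≤ 0 := Real.sin_nonpos_of_nonpos_of_neg_pi_le hφ.2 hφ.1
    simp [circleMap, Complex.exp_ofReal_mul_I_im]
    nlinarith
  have e1 : ∫ t in (-ρ)..ρ, f (t : ℂ) = P (ρ : ℝ) - P ((-ρ : ℝ) : ℂ) := by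
    refine intervalIntegral.integral_eq_sub_of_hasDerivAt (f := fun t : ℝ => P t) ?_ ?_
    · intro t ht
      rw [Set.uIcc_of_le (by linarith)] at ht
      refine (hP t (hmem t ?_ (by simp))).comp_ofReal
      simpa using abs_le.2 ht
    · refine ContinuousOn.intervalIntegrable ?_
      refine hfc.comp (by fun_prop) ?_
      intro t _
      simpa using hε
  have e2 : ∫ φ in (-Real.pi)..0, f (circleMap 0 ρ φ) * (circleMap 0 ρ φ * Complex.I)
      = P (circleMap 0 ρ 0) - P (circleMap 0 ρ (-Real.pi)) := by
    refine intervalIntegral.integral_eq_sub_of_hasDerivAt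
      (f := fun φ : ℝ => P (circleMap 0 ρ φ)) ?_ ?_
    · intro φ hφ
      have h1 := hP (circleMap 0 ρ φ) (hmem _ (by simp [abs_of_pos hρ]) (him φ hφ))
      exact HasDerivAt.comp φ h1 (hasDerivAt_circleMap 0 ρ φ)
    · refine ContinuousOn.intervalIntegrable ?_
      refine ContinuousOn.mul (hfc.comp (by fun_prop) ?_) (by fun_prop)
      intro φ hφ
      exact lt_of_le_of_lt (him φ hφ) hε
  rw [e1, e2]
  simp [circleMap, Complex.exp_neg]

lemma circle_coeff (r : ℝ) (G : ℂ → ℂ) (s : ℝ) (hs : 0 < s) (hsr : s < r)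
    (hG : ∀ w : ℂ, ‖w‖ < r → DifferentiableAt ℂ G w)
    (hconj : ∀ w : ℂ, ‖w‖ < r → G (starRingEnd ℂ w) = starRingEnd ℂ (G w)) (n : ℕ) :
    (∫ φ in (-Real.pi)..0,
      ((circleMap 0 s⁻¹ φ) ^ n * G (circleMap 0 s⁻¹ φ)⁻¹)).re =
      Real.pi * ((iteratedDeriv n G 0).re / (n.factorial : ℝ)) := by
  set Q : ℝ → ℂ := fun φ => (circleMap 0 s⁻¹ φ) ^ n * G (circleMap 0 s⁻¹ φ)⁻¹ with hQ
  have hinv : ∀ φ, (circleMap 0 s⁻¹ φ)⁻¹ = circleMap 0 s (-φ) := by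
    intro φ
    simp [circleMap, Complex.exp_neg, mul_comm]
  have hne : ∀ φ, circleMap 0 s φ ≠ 0 := fun φ => by
    simpa using circleMap_ne_center (c := 0) hs.ne' (θ := φ)
  have hnorm : ∀ φ, ‖circleMap 0 s φ‖ < r := fun φ => by simpa [abs_of_pos hs] using hsr
  have hcj : ∀ (t : ℝ) φ, circleMap 0 t (-φ) = starRingEnd ℂ (circleMap 0 t φ) := by
    intro t φ
    simp [circleMap, ← Complex.exp_conj]
  have hQc : Continuous Q := by
    have h1 : Continuous fun φ : ℝ => G (circleMap 0 s (-φ)) := by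
      refine continuous_iff_continuousAt.2 fun φ => ?_
      exact ContinuousAt.comp (f := fun φ : ℝ => circleMap 0 s (-φ)) (g := G)
        (hG _ (hnorm _)).continuousAt (by fun_prop)
    simp only [hQ, hinv]
    exact Continuous.mul (by fun_prop) h1
  have hQs : ∀ φ, Q (-φ) = starRingEnd ℂ (Q φ) := by
    intro φ
    simp only [hQ, map_mul, map_pow, hinv]
    rw [← hconj _ (hnorm _), ← hcj, ← hcj]
  have hcirc := DifferentiableOn.circleIntegral_one_div_sub_center_pow_smul (f := G) (c := 0) hs n
    (fun w hw => (hG w (lt_of_le_of_lt (by simpa using hw) hsr)).differentiableWithinAt)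
  have hcirc2 : ∫ φ in (0 : ℝ)..(2 * Real.pi), Q (-φ) =
      2 * Real.pi / n.factorial * iteratedDeriv n G 0 := by
    rw [circleIntegral] at hcirc
    have : ∀ φ : ℝ, deriv (circleMap 0 s) φ • (1 / (circleMap 0 s φ - 0) ^ (n + 1)) •
        G (circleMap 0 s φ) = Complex.I * Q (-φ) := by
      intro φ
      have h0 := hne φ
      have h2 : circleMap 0 s⁻¹ (-φ) = (circleMap 0 s φ)⁻¹ := by
        rw [eq_comm, inv_eq_iff_eq_inv, hinv, neg_neg]
      simp only [deriv_circleMap, sub_zero, smul_eq_mul, hQ, h2, inv_inv, inv_pow]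
      field_simp
      ring
    simp_rw [this] at hcirc
    rw [intervalIntegral.integral_const_mul] at hcirc
    refine mul_left_cancel₀ Complex.I_ne_zero ?_
    rw [hcirc, smul_eq_mul]
    ring
  have hper : Function.Periodic (fun φ => Q (-φ)) (2 * Real.pi) := by
    intro φ
    have : circleMap 0 s⁻¹ (-(φ + 2 * Real.pi)) = circleMap 0 s⁻¹ (-φ) := by
      have := periodic_circleMap 0 s⁻¹ (-(φ + 2 * Real.pi))
      rw [← this]; congr 1; ring
    simp only [hQ, this]
  have h3 : ∫ φ in (-Real.pi)..Real.pi, Q (-φ) =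
      2 * Real.pi / n.factorial * iteratedDeriv n G 0 := by
    have := hper.intervalIntegral_add_eq (-Real.pi) 0
    rw [zero_add, hcirc2] at this
    rw [← this]; congr 1; ring
  rw [intervalIntegral.integral_comp_neg, neg_neg,
    ← intervalIntegral.integral_add_adjacent_intervals (b := 0)
      (hQc.intervalIntegrable _ _) (hQc.intervalIntegrable _ _)] at h3
  have h4 : (∫ φ in (0 : ℝ)..Real.pi, Q φ) =
      starRingEnd ℂ (∫ φ in (-Real.pi)..0, Q φ) := by
    have := intervalIntegral.integral_comp_neg (a := -Real.pi) (b := 0) Q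
    rw [neg_neg, neg_zero] at this
    rw [← this]
    simp_rw [hQs]
    rw [intervalIntegral.integral_of_le (by linarith [Real.pi_pos]),
      intervalIntegral.integral_of_le (by linarith [Real.pi_pos])]
    exact integral_conj
  rw [h4, Complex.add_conj] at h3
  have h5 := congrArg Complex.re h3
  have h6 : (2 * (Real.pi : ℂ) / n.factorial) = ((2 * Real.pi / n.factorial : ℝ) : ℂ) := by
    push_cast; rfl
  rw [h6, Complex.re_ofReal_mul, Complex.ofReal_re] at h5
  rw [mul_div_assoc'] at *
  have : 2 * (∫ φ in (-Real.pi)..0, Q φ).re =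
    2 * (Real.pi * (iteratedDeriv n G 0).re / n.factorial) := by rw [h5]; ring
  linarith

lemma pick_moments (r : ℝ) (hr : 0 < r) (G : ℂ → ℂ)
    (hG : ∀ w : ℂ, ‖w‖ < r → DifferentiableAt ℂ G w)
    (hG' : ∀ w : ℂ, 0 < w.im → DifferentiableAt ℂ G w)
    (hpos : ∀ w : ℂ, 0 < w.im → 0 ≤ (G w).im)
    (hconj : ∀ w : ℂ, ‖w‖ < r → G (starRingEnd ℂ w) = starRingEnd ℂ (G w)) :
    ∃ μ : Measure ℝ, IsFiniteMeasure μ ∧ μ (Set.Icc (-r⁻¹) r⁻¹)ᶜ = 0 ∧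
      ∀ n : ℕ, 1 ≤ n →
        (iteratedDeriv n G 0).re = (n.factorial : ℝ) * ∫ t : ℝ, t ^ (n - 1) ∂μ := by
  set s : ℝ := r / 2 with hs
  have hs0 : 0 < s := by positivity
  have hsr : s < r := by rw [hs]; linarith
  set ρ : ℝ := s⁻¹ with hρ
  have hρ0 : 0 < ρ := by positivity
  have hρr : ρ = 2 / r := by rw [hρ, hs, inv_div]
  let ε : ℕ → ℝ := fun j => (1 / (2 * r)) / ((j : ℝ) + 1)
  have hε0 : ∀ j, 0 < ε j := fun j => by positivity
  have hε1 : ∀ j, ε j ≤ 1 / (2 * r) := fun j => by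
    refine div_le_self (by positivity) ?_
    have : (0 : ℝ) ≤ j := Nat.cast_nonneg j
    linarith
  have hεlim : Tendsto ε atTop (𝓝 0) := by
    have := (tendsto_one_div_add_atTop_nhds_zero_nat (𝕜 := ℝ)).const_mul (1 / (2 * r))
    rw [mul_zero] at this
    refine this.congr fun j => ?_
    simp only [ε]; ring
  have himinv : ∀ (e : ℝ) (z : ℂ), z.im < e → 0 < ((z - e * Complex.I)⁻¹).im := by
    intro e z hz
    rw [Complex.inv_im]
    have h1 : (z - e * Complex.I).im < 0 := by simp; linarith
    refine div_pos (by linarith) (Complex.normSq_pos.2 ?_)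
    intro h; rw [h] at h1; simp at h1
  have hne : ∀ (e : ℝ) (z : ℂ), z.im < e → z - e * Complex.I ≠ 0 := by
    intro e z hz h
    have := himinv e z hz
    rw [h] at this; simp at this
  have hdiff : ∀ (e : ℝ) (z : ℂ), z.im < e →
      DifferentiableAt ℂ (fun z : ℂ => G (z - e * Complex.I)⁻¹) z := by
    intro e z hz
    exact DifferentiableAt.comp (g := G) (f := fun z : ℂ => (z - e * Complex.I)⁻¹) z
      (hG' _ (himinv e z hz)) (DifferentiableAt.inv (by fun_prop) (hne e z hz))
  let d : ℕ → ℝ → ℝ := fun j t => Real.pi⁻¹ * (G ((t : ℂ) - ε j * Complex.I)⁻¹).im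
  have hcG : ∀ j, Continuous fun t : ℝ => G ((t : ℂ) - ε j * Complex.I)⁻¹ := by
    intro j
    refine continuous_iff_continuousAt.2 fun t => ?_
    exact ContinuousAt.comp (f := fun t : ℝ => (t : ℂ))
      (g := fun z : ℂ => G (z - ε j * Complex.I)⁻¹)
      (hdiff (ε j) t (by simpa using hε0 j)).continuousAt (by fun_prop)
  have hd : ∀ j, Continuous (d j) := fun j =>
    continuous_const.mul (Complex.continuous_im.comp (hcG j))
  have hd0 : ∀ j t, 0 ≤ d j t := fun j t =>
    mul_nonneg (by positivity) (hpos _ (himinv _ _ (by simpa using hε0 j)))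
  let a : ℕ → ℝ := fun k => (iteratedDeriv (k + 1) G 0).re / ((k + 1).factorial : ℝ)
  have hshift : ∀ (e φ : ℝ), 0 ≤ e → e ≤ 1 / (2 * r) →
      ‖(circleMap 0 ρ φ - e * Complex.I)⁻¹‖ ≤ 2 * r / 3 ∧ circleMap 0 ρ φ - e * Complex.I ≠ 0 := by
    intro e φ he he'
    have h1 : 3 / (2 * r) ≤ ‖circleMap 0 ρ φ - e * Complex.I‖ := by
      have := norm_sub_norm_le (circleMap 0 ρ φ) (e * Complex.I)
      rw [norm_circleMap_zero, norm_mul, Complex.norm_I, mul_one, Complex.norm_real,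
        Real.norm_eq_abs, abs_of_nonneg he, abs_of_pos hρ0] at this
      have h2 : 3 / (2 * r) = 2 / r - 1 / (2 * r) := by field_simp; norm_num
      linarith
    have h3 : 0 < 3 / (2 * r) := by positivity
    refine ⟨?_, norm_pos_iff.1 (h3.trans_le h1)⟩
    rw [norm_inv]
    calc _ ≤ (3 / (2 * r))⁻¹ := inv_anti₀ h3 h1
      _ = _ := by rw [inv_div]
  obtain ⟨C, hC⟩ := (isCompact_closedBall (0 : ℂ) (2 * r / 3)).exists_bound_of_continuousOn
    (f := G) (fun w hw => (hG w (by
      have : ‖w‖ ≤ 2 * r / 3 := by simpa using hw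
      linarith)).continuousAt.continuousWithinAt)
  have ha : ∀ k, Tendsto (fun j => ∫ t in (-ρ)..ρ, t ^ k * d j t) atTop (𝓝 (a k)) := by
    intro k
    have e1 : ∀ j, ∫ t in (-ρ)..ρ, t ^ k * d j t = Real.pi⁻¹ *
        (∫ φ in (-Real.pi)..0, (circleMap 0 ρ φ) ^ (k + 1) *
          G (circleMap 0 ρ φ - ε j * Complex.I)⁻¹).re := by
      intro j
      have h1 := half_circle_integral (fun z => z ^ k * G (z - ε j * Complex.I)⁻¹) (ε j) ρ
        (hε0 j) hρ0 (fun z hz => DifferentiableAt.mul (by fun_prop) (hdiff _ z hz))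
      have h2 : ∫ t in (-ρ)..ρ, t ^ k * d j t = Real.pi⁻¹ *
          (∫ t in (-ρ)..ρ, (t : ℂ) ^ k * G ((t : ℂ) - ε j * Complex.I)⁻¹).im := by
        have h3 := Complex.imCLM.intervalIntegral_comp_comm (a := -ρ) (b := ρ) (μ := volume)
          (f := fun t : ℝ => (t : ℂ) ^ k * G ((t : ℂ) - ε j * Complex.I)⁻¹)
          (Continuous.intervalIntegrable (Continuous.mul (by fun_prop) (hcG j)) _ _)
        simp only [Complex.imCLM_apply] at h3
        rw [← h3, ← intervalIntegral.integral_const_mul]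
        refine intervalIntegral.integral_congr fun t _ => ?_
        simp only [d]
        rw [← Complex.ofReal_pow, Complex.im_ofReal_mul]
        ring
      rw [h2, h1]
      congr 1
      have h4 : ∀ φ : ℝ, (circleMap 0 ρ φ) ^ k * G (circleMap 0 ρ φ - ε j * Complex.I)⁻¹ *
          (circleMap 0 ρ φ * Complex.I) = Complex.I * ((circleMap 0 ρ φ) ^ (k + 1) *
          G (circleMap 0 ρ φ - ε j * Complex.I)⁻¹) := by
        intro φ; ring
      simp_rw [h4]
      rw [intervalIntegral.integral_const_mul, Complex.I_mul_im]
    simp_rw [e1]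
    have e2 : a k = Real.pi⁻¹ * (∫ φ in (-Real.pi)..0, (circleMap 0 ρ φ) ^ (k + 1) *
          G (circleMap 0 ρ φ)⁻¹).re := by
      rw [circle_coeff r G s hs0 hsr hG hconj (k + 1)]
      simp only [a]
      rw [inv_mul_cancel_left₀ Real.pi_ne_zero]
    rw [e2]
    refine Tendsto.const_mul _ ((Complex.continuous_re.tendsto _).comp ?_)
    refine intervalIntegral.tendsto_integral_filter_of_dominated_convergence
      (fun _ => ρ ^ (k + 1) * C) ?_ ?_ ?_ ?_
    · refine Eventually.of_forall fun j => Continuous.aestronglyMeasurable ?_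
      refine Continuous.mul (by fun_prop) (continuous_iff_continuousAt.2 fun φ => ?_)
      obtain ⟨h1, h2⟩ := hshift (ε j) φ (hε0 j).le (hε1 j)
      exact ContinuousAt.comp (g := G) (f := fun φ : ℝ => (circleMap 0 ρ φ - ε j * Complex.I)⁻¹)
        (hG _ (by linarith)).continuousAt (ContinuousAt.inv₀ (by fun_prop) h2)
    · refine Eventually.of_forall fun j => Eventually.of_forall fun φ _ => ?_
      rw [norm_mul, norm_pow, norm_circleMap_zero, abs_of_pos hρ0]
      gcongr
      exact hC _ (by simpa using (hshift (ε j) φ (hε0 j).le (hε1 j)).1)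
    · simp
    · refine Eventually.of_forall fun φ _ => Tendsto.const_mul _ ?_
      obtain ⟨h1, h2⟩ := hshift 0 φ le_rfl (by positivity)
      simp only [Complex.ofReal_zero, zero_mul, sub_zero] at h1 h2
      refine Tendsto.comp (g := G) (hG _ (by linarith)).continuousAt.tendsto ?_
      refine Tendsto.inv₀ ?_ h2
      have h5 : Tendsto (fun j => circleMap 0 ρ φ - (ε j : ℂ) * Complex.I) atTop
          (𝓝 (circleMap 0 ρ φ - ((0 : ℝ) : ℂ) * Complex.I)) :=
        (((Complex.continuous_ofReal.tendsto _).comp hεlim).mul_const _).const_sub _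
      simpa using h5
  obtain ⟨μ, hμ1, hμ2, hμ3⟩ := exists_measure_of_tendsto_moments ρ hρ0 d hd hd0 a ha
  refine ⟨μ, hμ1, ?_, ?_⟩
  · refine support_of_moments_bound μ ρ r⁻¹ (by positivity) hμ2 fun c hc => ?_
    have hc0 : 0 < c := lt_trans (by positivity) hc
    have hcr : c⁻¹ < r := inv_lt_of_inv_lt₀ hr hc
    obtain ⟨D, hD⟩ := (isCompact_closedBall (0 : ℂ) c⁻¹).exists_bound_of_continuousOn
      (f := G) (fun w hw => (hG w (by
        have : ‖w‖ ≤ c⁻¹ := by simpa using hw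
        linarith)).continuousAt.continuousWithinAt)
    refine ⟨D * c, fun k => ?_⟩
    rw [hμ3]
    have hdc : DiffContOnCl ℂ G (Metric.ball 0 c⁻¹) := by
      refine DifferentiableOn.diffContOnCl ?_
      intro w hw
      have : ‖w‖ ≤ c⁻¹ := by simpa using Metric.closure_ball_subset_closedBall hw
      exact (hG w (by linarith)).differentiableWithinAt
    have h1 := Complex.norm_iteratedDeriv_le_of_forall_mem_sphere_norm_le (k + 1)
      (inv_pos.2 hc0) hdc (fun z hz => hD z (Metric.sphere_subset_closedBall hz))
    simp only [a]
    rw [abs_div, div_le_iff₀ (by positivity)]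
    refine ((Complex.abs_re_le_norm _).trans h1).trans (le_of_eq ?_)
    rw [abs_of_pos (by positivity : (0 : ℝ) < ((k + 1).factorial : ℝ))]
    rw [inv_pow, div_inv_eq_mul]
    ring
  · intro n hn
    obtain ⟨k, rfl⟩ := Nat.exists_eq_add_of_le' hn
    rw [Nat.add_sub_cancel, hμ3]
    simp only [a]
    have : ((k + 1).factorial : ℝ) ≠ 0 := by positivity
    field_simp

lemma mobius_extension (R : ℝ) (φ₁ φ₂ f₁ f₂ : ℝ → ℝ) (H : ℂ → ℂ) (α β γ δ : ℝ) (hR : 0 < R)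
    (hf₁ : ∀ t, f₁ t = α * φ₁ t + β * φ₂ t) (hf₂ : ∀ t, f₂ t = γ * φ₁ t + δ * φ₂ t)
    (hne : ∀ t, f₁ t ≠ 0) (hφ : Continuous φ₁)
    (hiso : ∀ t, φ₁ t = 0 → ∀ᶠ s in 𝓝[≠] t, φ₁ s ≠ 0)
    (hH : ∀ t : ℝ, φ₁ t ≠ 0 → H t = ((φ₂ t / φ₁ t : ℝ) : ℂ))
    (hHd : DifferentiableOn ℂ H {z : ℂ | |z.im| < R ∧ ∀ t : ℝ, φ₁ t = 0 → z ≠ (t : ℂ)})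
    (hHp : ∀ t : ℝ, φ₁ t = 0 →
      Tendsto (fun z => ‖H z‖) (nhdsWithin (t : ℂ) {(t : ℂ)}ᶜ) atTop)
    (hHi : ∀ z : ℂ, 0 < z.im → z.im < R → 0 < (α * δ - β * γ) * (H z).im) :
    ∃ K : ℂ → ℂ, (∀ z : ℂ, 0 ≤ z.im → z.im < R → AnalyticAt ℂ K z) ∧
      (∀ t : ℝ, K t = ((f₂ t / f₁ t : ℝ) : ℂ)) ∧
      (∀ z : ℂ, 0 < z.im → z.im < R → 0 < (K z).im) := by
  let M : ℂ → ℂ := fun z => (γ + δ * H z) / (α + β * H z)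
  let K : ℂ → ℂ := fun z => if z.im = 0 then ((f₂ z.re / f₁ z.re : ℝ) : ℂ) else M z
  let O : Set ℂ := {z | φ₁ z.re ≠ 0 ∨ z.im ≠ 0}
  have hO : IsOpen O := by
    have h1 : IsOpen {z : ℂ | φ₁ z.re ≠ 0} :=
      isOpen_ne_fun (hφ.comp Complex.continuous_re) continuous_const
    have h2 : IsOpen {z : ℂ | z.im ≠ 0} := isOpen_ne_fun Complex.continuous_im continuous_const
    exact h1.union h2
  have hS : {z : ℂ | |z.im| < R ∧ ∀ t : ℝ, φ₁ t = 0 → z ≠ (t : ℂ)} = {z : ℂ | |z.im| < R} ∩ O := by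
    ext z
    refine and_congr_right fun _ => ⟨fun h => ?_, fun h t ht hz => ?_⟩
    · by_contra hcon
      simp only [O, Set.mem_ofPred_eq, not_or, not_not] at hcon
      exact h z.re hcon.1 (Complex.ext (by simp) (by simpa using hcon.2))
    · subst hz
      simp [O, ht] at h
  rw [hS] at hHd
  have hRo : IsOpen {z : ℂ | |z.im| < R} := isOpen_lt (by fun_prop) continuous_const
  have hSo : IsOpen ({z : ℂ | |z.im| < R} ∩ O) :=
    hRo.inter hO
  have hKM : ∀ z ∈ O, K z = M z := by
    intro z hz
    by_cases him : z.im = 0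
    · have hz' : φ₁ z.re ≠ 0 := hz.resolve_right (fun h => h him)
      have hzr : z = ((z.re : ℝ) : ℂ) := Complex.ext (by simp) (by simpa using him)
      have h1 := hH z.re hz'
      rw [← hzr] at h1
      have h2 := hne z.re
      simp only [K, him, if_true, M, h1]
      rw [hf₁] at h2
      rw [hf₁, hf₂]
      norm_cast
      have h3 : α + β * (φ₂ z.re / φ₁ z.re) ≠ 0 := by
        intro h
        apply h2
        field_simp at h
        linarith
      rw [div_eq_div_iff h2 h3]
      field_simp
    · simp [K, him]
  have hKd : ∀ z : ℂ, |z.im| < R → z ∈ O → (α : ℂ) + β * H z ≠ 0 → AnalyticAt ℂ K z := by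
    intro z hz hzO hd
    have h1 : AnalyticAt ℂ H z := hHd.analyticAt (hSo.mem_nhds ⟨hz, hzO⟩)
    have h2 : AnalyticAt ℂ M z :=
      AnalyticAt.div (by fun_prop) (by fun_prop) hd
    refine h2.congr ?_
    filter_upwards [hO.mem_nhds hzO] with w hw using (hKM w hw).symm
  have hden : ∀ z : ℂ, 0 < z.im → z.im < R → (α : ℂ) + β * H z ≠ 0 := by
    intro z h1 h2 h
    have h3 := hHi z h1 h2
    have h4 := congrArg Complex.im h
    have h5 := congrArg Complex.re h
    simp at h4 h5
    rcases h4 with h4 | h4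
    · rw [h4] at h5
      simp at h5
      rw [h4, h5] at h3
      simp at h3
    · rw [h4] at h3; simp at h3
  refine ⟨K, ?_, ?_, ?_⟩
  · intro z h0 h1
    rcases h0.lt_or_eq with h0 | h0
    · exact hKd z (by rwa [abs_of_pos h0]) (Or.inr h0.ne') (hden z h0 h1)
    have habs : |z.im| < R := by rw [← h0]; simpa using hR
    have hzr : z = ((z.re : ℝ) : ℂ) := Complex.ext (by simp) (by simpa using h0.symm)
    by_cases hz : φ₁ z.re = 0
    · obtain ⟨t, ht⟩ : ∃ t : ℝ, t = z.re := ⟨_, rfl⟩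
      rw [← ht] at hzr hz
      subst hzr
      have hβ : β * φ₂ t ≠ 0 := by
        have := hne t
        rw [hf₁, hz] at this
        simpa using this
      have hβ0 : β ≠ 0 := left_ne_zero_of_mul hβ
      have hφ₂ : φ₂ t ≠ 0 := right_ne_zero_of_mul hβ
      have hHinv : Tendsto (fun z => (H z)⁻¹) (𝓝[≠] (t : ℂ)) (𝓝 0) :=
        tendsto_inv₀_cobounded.comp (tendsto_norm_atTop_iff_cobounded.1 (hHp t hz))
      have hHne : ∀ᶠ z in 𝓝[≠] (t : ℂ), H z ≠ 0 := by
        filter_upwards [(hHp t hz).eventually_gt_atTop 0] with z hz using norm_pos_iff.1 hz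
      have hlimd : Tendsto (fun z => (α : ℂ) * (H z)⁻¹ + β) (𝓝[≠] (t : ℂ)) (𝓝 (α * 0 + β)) :=
        (hHinv.const_mul _).add_const _
      have hlimn : Tendsto (fun z => (γ : ℂ) * (H z)⁻¹ + δ) (𝓝[≠] (t : ℂ)) (𝓝 (γ * 0 + δ)) :=
        (hHinv.const_mul _).add_const _
      have hβc : (α : ℂ) * 0 + β ≠ 0 := by simpa using hβ0
      have hden' : ∀ᶠ z in 𝓝[≠] (t : ℂ), (α : ℂ) + β * H z ≠ 0 := by
        filter_upwards [hHne, hlimd.eventually_ne hβc] with z h1 h2 h3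
        apply h2
        field_simp
        linear_combination h3
      have hOe : ∀ᶠ z in 𝓝[≠] (t : ℂ), z ∈ O := by
        have h1 := hiso t hz
        rw [eventually_nhdsWithin_iff] at h1 ⊢
        have h2 : Tendsto Complex.re (𝓝 (t : ℂ)) (𝓝 t) := Complex.continuous_re.tendsto (t : ℂ)
        filter_upwards [h2.eventually h1] with z hz hzt
        by_contra hcon
        simp only [O, Set.mem_ofPred_eq, not_or, not_not] at hcon
        refine hz ?_ hcon.1
        intro hre
        exact hzt (Complex.ext (by simpa using hre) (by simpa using hcon.2))
      have hRe : ∀ᶠ z in 𝓝[≠] (t : ℂ), |z.im| < R :=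
        mem_nhdsWithin_of_mem_nhds (hRo.mem_nhds habs)
      refine Complex.analyticAt_of_differentiable_on_punctured_nhds_of_continuousAt ?_ ?_
      · filter_upwards [hden', hOe, hRe] with z h1 h2 h3 using (hKd z h3 h2 h1).differentiableAt
      · rw [continuousAt_iff_punctured_nhds]
        have hKt : K t = (γ * 0 + δ) / (α * 0 + β) := by
          simp only [K, Complex.ofReal_im, if_true, Complex.ofReal_re, hf₁, hf₂, hz]
          push_cast
          have : (φ₂ t : ℂ) ≠ 0 := by exact_mod_cast hφ₂
          simp only [mul_zero, zero_add]
          rw [mul_div_mul_right _ _ this]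
        rw [hKt]
        refine (hlimn.div hlimd hβc).congr' ?_
        filter_upwards [hHne, hOe, hden', hlimd.eventually_ne hβc] with z h1 h2 h3 h4
        rw [hKM z h2]
        simp only [M, Pi.div_apply]
        rw [div_eq_div_iff h4 h3]
        field_simp
    · refine hKd z habs (Or.inl hz) ?_
      have h2 := hne z.re
      rw [hf₁] at h2
      have h1 := hH z.re hz
      rw [← hzr] at h1
      rw [h1]
      norm_cast
      intro h
      apply h2
      field_simp at h
      linarith
  · intro t
    simp [K]
  · intro z h0 h1
    have h2 := hHi z h0 h1
    have h3 := hden z h0 h1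
    simp only [K, h0.ne', if_false, M]
    rw [Complex.div_im, ← sub_div]
    refine div_pos ?_ (Complex.normSq_pos.2 h3)
    simp
    nlinarith

lemma reflect_extension (R : ℝ) (q : ℝ → ℝ) (K : ℂ → ℂ) (hR : 0 < R)
    (hK : ∀ z : ℂ, 0 ≤ z.im → z.im < R → AnalyticAt ℂ K z)
    (hKr : ∀ t : ℝ, K t = ((q t : ℝ) : ℂ))
    (hKi : ∀ z : ℂ, 0 < z.im → z.im < R → 0 < (K z).im) :
    ∃ L : ℂ → ℂ, (∀ z : ℂ, |z.im| < R → DifferentiableAt ℂ L z) ∧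
      (∀ t : ℝ, L t = ((q t : ℝ) : ℂ)) ∧
      (∀ z : ℂ, 0 < z.im → z.im < R → 0 < (L z).im) ∧
      (∀ z : ℂ, L (starRingEnd ℂ z) = starRingEnd ℂ (L z)) := by
  let K' : ℂ → ℂ := fun z => starRingEnd ℂ (K (starRingEnd ℂ z))
  let L : ℂ → ℂ := fun z => if 0 ≤ z.im then K z else K' z
  have hK' : ∀ z : ℂ, z.im ≤ 0 → -R < z.im → DifferentiableAt ℂ K' z := by
    intro z h0 h1
    have := (hK (starRingEnd ℂ z) (by simpa using h0) (by simp; linarith)).differentiableAt.conj_conj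
    simpa [K', Function.comp_def] using this
  refine ⟨L, ?_, ?_, ?_, ?_⟩
  · intro z hz
    rw [abs_lt] at hz
    rcases lt_trichotomy z.im 0 with h | h | h
    · refine (hK' z h.le hz.1).congr_of_eventuallyEq ?_
      filter_upwards [(isOpen_lt Complex.continuous_im continuous_const).mem_nhds h] with w hw
      have hw' : ¬ (0 ≤ w.im) := not_le.2 hw
      simp [L, hw']
    · have hzr : z = ((z.re : ℝ) : ℂ) := Complex.ext (by simp) (by simpa using h)
      obtain ⟨t, ht⟩ : ∃ t : ℝ, t = z.re := ⟨_, rfl⟩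
      rw [← ht] at hzr
      subst hzr
      have hKt : AnalyticAt ℂ K t := hK t (by simp) (by simpa using hR)
      have hct : Tendsto (starRingEnd ℂ) (𝓝 (t : ℂ)) (𝓝 (t : ℂ)) := by
        have := Complex.continuous_conj.tendsto (t : ℂ)
        rwa [Complex.conj_ofReal] at this
      have hKt' : AnalyticAt ℂ K' t := by
        rw [Complex.analyticAt_iff_eventually_differentiableAt] at hKt ⊢
        filter_upwards [hct.eventually hKt] with w hw
        simpa [K', Function.comp_def] using hw.conj_conj
      have hre : Tendsto (fun s : ℝ => (s : ℂ)) (𝓝[≠] t) (𝓝[≠] (t : ℂ)) := by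
        refine tendsto_nhdsWithin_of_tendsto_nhds_of_eventually_within _
          ((Complex.continuous_ofReal.tendsto t).mono_left nhdsWithin_le_nhds) ?_
        filter_upwards [self_mem_nhdsWithin] with s hs h
        exact hs (by simpa using h)
      have hfr : ∃ᶠ z in 𝓝[≠] (t : ℂ), K z = K' z := by
        refine hre.frequently (Frequently.of_forall fun s => ?_)
        simp [K', hKr]
      have heq := (hKt.frequently_eq_iff_eventually_eq hKt').1 hfr
      refine hKt.differentiableAt.congr_of_eventuallyEq ?_
      filter_upwards [heq] with w hw
      simp [L, hw]
    · refine (hK z h.le hz.2).differentiableAt.congr_of_eventuallyEq ?_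
      filter_upwards [(isOpen_lt continuous_const Complex.continuous_im).mem_nhds h] with w hw
      have hw' : 0 ≤ w.im := le_of_lt hw
      simp [L, hw']
  · intro t
    simp [L, hKr]
  · intro z h0 h1
    simpa [L, h0.le] using hKi z h0 h1
  · intro z
    rcases lt_trichotomy z.im 0 with h | h | h
    · have h1 : ¬ (0 ≤ z.im) := not_le.2 h
      simp [L, h1, h.le, K']
    · have hzr : z = ((z.re : ℝ) : ℂ) := Complex.ext (by simp) (by simpa using h)
      rw [hzr]
      simp [L, hKr]
    · have h1 : ¬ (z.im ≤ 0) := not_le.2 h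
      simp [L, h1, h.le, K']

lemma iteratedDeriv_re (r : ℝ) (G : ℂ → ℂ) (hG : ∀ w : ℂ, ‖w‖ < r → DifferentiableAt ℂ G w)
    (n : ℕ) : ∀ t : ℝ, |t| < r →
      iteratedDeriv n (fun s : ℝ => (G s).re) t = (iteratedDeriv n G t).re := by
  have hA : AnalyticOnNhd ℂ G (Metric.ball 0 r) :=
    DifferentiableOn.analyticOnNhd
      (fun w hw => (hG w (by simpa using hw)).differentiableWithinAt) Metric.isOpen_ball
  induction n with
  | zero => intro t _; simp
  | succ n ih =>
    intro t ht
    rw [iteratedDeriv_succ, iteratedDeriv_succ]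
    have h1 : iteratedDeriv n (fun s : ℝ => (G s).re) =ᶠ[𝓝 t]
        fun s : ℝ => (iteratedDeriv n G s).re := by
      filter_upwards [(isOpen_lt continuous_abs continuous_const).mem_nhds ht] with s hs
      exact ih s hs
    rw [h1.deriv_eq]
    have h2 : DifferentiableAt ℂ (iteratedDeriv n G) t := by
      have h3 := (hA.iterated_deriv n) t (by simpa using ht)
      rw [← iteratedDeriv_eq_iterate] at h3
      exact h3.differentiableAt
    exact h2.hasDerivAt.real_of_complex.deriv

lemma strip_moments (R : ℝ) (hR : 0 < R) (x : ℝ) (q : ℝ → ℝ) (L : ℂ → ℂ)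
    (hL : ∀ z : ℂ, |z.im| < R → DifferentiableAt ℂ L z)
    (hLr : ∀ t : ℝ, L t = ((q t : ℝ) : ℂ))
    (hLi : ∀ z : ℂ, 0 < z.im → z.im < R → 0 < (L z).im)
    (hLc : ∀ z : ℂ, L (starRingEnd ℂ z) = starRingEnd ℂ (L z)) :
    ∃ G : ℂ → ℂ, (∀ w : ℂ, ‖w‖ < R / Real.pi → DifferentiableAt ℂ G w) ∧
      (∀ w : ℂ, 0 < w.im → DifferentiableAt ℂ G w) ∧
      (∀ w : ℂ, 0 < w.im → 0 ≤ (G w).im) ∧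
      (∀ w : ℂ, ‖w‖ < R / Real.pi → G (starRingEnd ℂ w) = starRingEnd ℂ (G w)) ∧
      (∀ t : ℝ, |t| < R / Real.pi → (G t).re =
        q (x + -(R / Real.pi) * Real.log (1 - (Real.pi / R) * t))) := by
  have hπ := Real.pi_pos
  let c : ℝ := R / Real.pi
  let c' : ℝ := Real.pi / R
  have hc : 0 < c := by positivity
  have hc' : 0 < c' := by positivity
  have hcc : c * Real.pi = R := by simp only [c]; field_simp
  have hcc' : c' * c = 1 := by simp only [c, c']; field_simp
  let g : ℂ → ℂ := fun w => x + -(c : ℂ) * Complex.log (1 - c' * w)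
  have hgim : ∀ w, (g w).im = -c * (Complex.log (1 - c' * w)).im := by
    intro w
    simp only [g]
    rw [← Complex.ofReal_neg, Complex.add_im, Complex.ofReal_im, Complex.im_ofReal_mul, zero_add]
  have hsl : ∀ w : ℂ, ‖w‖ < c → 1 - c' * w ∈ Complex.slitPlane := by
    intro w hw
    left
    have h1 := (le_abs_self _).trans_lt ((Complex.abs_re_le_norm w).trans_lt hw)
    have h2 : c' * w.re < c' * c := mul_lt_mul_of_pos_left h1 hc'
    simp
    linarith
  have hup : ∀ w : ℂ, 0 < w.im → (1 - c' * w : ℂ).im < 0 := by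
    intro w hw
    have := mul_pos hc' hw
    simpa using this
  have hsl' : ∀ w : ℂ, 0 < w.im → 1 - c' * w ∈ Complex.slitPlane := fun w hw =>
    Or.inr (hup w hw).ne
  have hgR : ∀ w : ℂ, 1 - c' * w ∈ Complex.slitPlane → |(g w).im| < R := by
    intro w hw
    rw [hgim, abs_mul, abs_neg, abs_of_pos hc, ← hcc, Complex.log_im]
    refine mul_lt_mul_of_pos_left ?_ hc
    rw [Complex.mem_slitPlane_iff_arg] at hw
    rw [abs_lt]
    exact ⟨Complex.neg_pi_lt_arg _, lt_of_le_of_ne (Complex.arg_le_pi _) hw.1⟩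
  have hgpos : ∀ w : ℂ, 0 < w.im → 0 < (g w).im := by
    intro w hw
    rw [hgim, Complex.log_im]
    have := Complex.arg_neg_iff.2 (hup w hw)
    nlinarith
  have hd : ∀ w : ℂ, 1 - c' * w ∈ Complex.slitPlane → DifferentiableAt ℂ (fun w => L (g w)) w := by
    intro w hw
    refine DifferentiableAt.comp (g := L) (f := g) w (hL _ (hgR w hw)) ?_
    have : DifferentiableAt ℂ (fun w : ℂ => Complex.log (1 - c' * w)) w :=
      DifferentiableAt.clog (by fun_prop) hw
    simp only [g]
    fun_prop
  refine ⟨fun w => L (g w), fun w hw => hd w (hsl w hw), fun w hw => hd w (hsl' w hw), ?_, ?_, ?_⟩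
  · intro w hw
    exact (hLi _ (hgpos w hw) ((le_abs_self _).trans_lt (hgR w (hsl' w hw)))).le
  · intro w hw
    simp only
    rw [← hLc]
    congr 1
    simp only [g, map_add, map_mul, map_neg, Complex.conj_ofReal]
    rw [← Complex.log_conj _ (Complex.slitPlane_arg_ne_pi (hsl w hw))]
    simp
  · intro t ht
    have h1 : 0 < 1 - c' * t := by
      have h1 := (le_abs_self _).trans_lt ht
      have h2 : c' * t < c' * c := mul_lt_mul_of_pos_left h1 hc'
      linarith
    have : g t = ((x + -c * Real.log (1 - c' * t) : ℝ) : ℂ) := by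
      simp only [g]
      push_cast
      rw [Complex.ofReal_log h1.le]
      push_cast
      rfl
    simp only
    rw [this, hLr, Complex.ofReal_re]

lemma wronskian_const (θ u v : ℝ → ℝ) (hu : IsSolution θ u) (hv : IsSolution θ v) (s t : ℝ) :
    u s * deriv v s - deriv u s * v s = u t * deriv v t - deriv u t * v t := by
  have hd : ∀ f : ℝ → ℝ, IsSolution θ f → ∀ t,
      HasDerivAt f (deriv f t) t ∧ HasDerivAt (deriv f) (-(θ t * f t)) t := by
    intro f hf t
    have h1 : Differentiable ℝ f := hf.1.differentiable (by simp)
    have h2 : Differentiable ℝ (deriv f) := by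
      exact (contDiff_infty_iff_deriv.1 hf.1).2.differentiable (by simp)
    refine ⟨(h1 t).hasDerivAt, ?_⟩
    have h3 := (h2 t).hasDerivAt
    rwa [show deriv (deriv f) t = -(θ t * f t) by linarith [hf.2 t]] at h3
  have hW : ∀ t, HasDerivAt (fun t => u t * deriv v t - deriv u t * v t) 0 t := by
    intro t
    obtain ⟨hu1, hu2⟩ := hd u hu t
    obtain ⟨hv1, hv2⟩ := hd v hv t
    have := (hu1.mul hv2).sub (hu2.mul hv1)
    refine this.congr_deriv ?_
    ring
  exact is_const_of_deriv_eq_zero (fun t => (hW t).differentiableAt) (fun t => (hW t).deriv) s t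

lemma solution_ne_zero (θ f : ℝ → ℝ) (hneg : ∀ t, θ t ≤ 0) (hf : IsSolution θ f) (x : ℝ)
    (h1 : f x = 1) (h2 : deriv f x = 0) (t : ℝ) : f t ≠ 0 := by
  have hf1 : Differentiable ℝ f := hf.1.differentiable (by simp)
  have hf2 : Differentiable ℝ (deriv f) := by
    exact (contDiff_infty_iff_deriv.1 hf.1).2.differentiable (by simp)
  have hm : Monotone (fun t => f t * deriv f t) := by
    refine monotone_of_deriv_nonneg (hf1.mul hf2) fun t => ?_
    have h3 := ((hf1 t).hasDerivAt.mul (hf2 t).hasDerivAt).deriv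
    have h4 : deriv (fun t => f t * deriv f t) t =
      deriv f t * deriv f t + f t * deriv (deriv f) t := h3
    rw [h4, show deriv (deriv f) t = -(θ t * f t) by linarith [hf.2 t]]
    nlinarith [mul_self_nonneg (deriv f t), mul_nonneg (neg_nonneg.2 (hneg t))
      (mul_self_nonneg (f t))]
  have hx : f x * deriv f x = 0 := by rw [h2, mul_zero]
  have hsq : ∀ s, HasDerivAt (fun s => f s * f s) (2 * (f s * deriv f s)) s := by
    intro s
    refine ((hf1 s).hasDerivAt.mul (hf1 s).hasDerivAt).congr_deriv ?_
    ring
  have hcont : Continuous (fun s => f s * f s) := hf1.continuous.mul hf1.continuous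
  have key : 1 ≤ f t * f t := by
    rcases le_total x t with h | h
    · have hmo : MonotoneOn (fun s => f s * f s) (Set.Ici x) := by
        refine monotoneOn_of_deriv_nonneg (convex_Ici x) hcont.continuousOn
          (fun s _ => (hsq s).differentiableAt.differentiableWithinAt) fun s hs => ?_
        rw [(hsq s).deriv]
        rw [interior_Ici] at hs
        have := hm (le_of_lt hs)
        simp only at this
        linarith
      have := hmo (Set.mem_Ici.2 le_rfl) h h
      simpa [h1] using this
    · have hmo : AntitoneOn (fun s => f s * f s) (Set.Iic x) := by
        refine antitoneOn_of_deriv_nonpos (convex_Iic x) hcont.continuousOn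
          (fun s _ => (hsq s).differentiableAt.differentiableWithinAt) fun s hs => ?_
        rw [(hsq s).deriv]
        rw [interior_Iic] at hs
        have := hm (le_of_lt hs)
        simp only at this
        linarith
      have := hmo h (Set.mem_Iic.2 le_rfl) h
      simpa [h1] using this
  intro h0
  rw [h0] at key
  norm_num at key

end Helpers

noncomputable section

open MeasureTheory Filter

/-- If θ is smooth and nonpositive, `0 < R`, and Hypothesis (H_R) holds,
then for every `x` there is a nonnegative Borel measure `μ_x` supported in
`[-π/R, π/R]` with `𝒮_n^{θ,g_R}(x) = n!·∫ t^{n-1} dμ_x(t)` for all `n ≥ 1`. -/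
theorem stmt4 (θ : ℝ → ℝ) (hθ : ContDiff ℝ (⊤ : ℕ∞) θ) (R : ℝ) (hR : 0 < R)
    (hHyp : HypR θ R) (hneg : ∀ t : ℝ, θ t ≤ 0) :
    ∀ (x : ℝ) (f₁ f₂ : ℝ → ℝ), IsFundPair θ x f₁ f₂ →
      ∃ μ : Measure ℝ, IsFiniteMeasure μ ∧
        μ (Set.Icc (-(Real.pi / R)) (Real.pi / R))ᶜ = 0 ∧
        ∀ n : ℕ, 1 ≤ n →
          SchR R x f₁ f₂ n = (Nat.factorial n : ℝ) * ∫ t : ℝ, t ^ (n - 1) ∂μ := by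
  intro x f₁ f₂ hfund
  obtain ⟨hf₁, hf₂, e1, e2, e3, e4⟩ := hfund
  obtain ⟨φ₁, φ₂, H, hφ₁, hφ₂, hW, hH, hHd, hHp, hHi⟩ := hHyp
  set W : ℝ := φ₁ 0 * deriv φ₂ 0 - deriv φ₁ 0 * φ₂ 0 with hWdef
  have hWt : ∀ t, φ₁ t * deriv φ₂ t - deriv φ₁ t * φ₂ t = W := fun t =>
    wronskian_const θ φ₁ φ₂ hφ₁ hφ₂ t 0
  have hne := solution_ne_zero θ f₁ hneg hf₁ x e1 e2
  -- coefficients of the fundamental pair in the basis `φ₁, φ₂`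
  let α : ℝ := deriv φ₂ x / W
  let β : ℝ := -deriv φ₁ x / W
  let γ : ℝ := -φ₂ x / W
  let δ : ℝ := φ₁ x / W
  have hr1 : ∀ t, f₁ t = α * φ₁ t + β * φ₂ t := by
    intro t
    have a1 := wronskian_const θ f₁ φ₂ hf₁ hφ₂ t x
    have a2 := wronskian_const θ φ₁ f₁ hφ₁ hf₁ t x
    rw [e1, e2] at a1 a2
    have a3 := hWt t
    simp only [α, β]
    field_simp
    linear_combination (-f₁ t) * a3 + φ₁ t * a1 + φ₂ t * a2
  have hr2 : ∀ t, f₂ t = γ * φ₁ t + δ * φ₂ t := by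
    intro t
    have a1 := wronskian_const θ f₂ φ₂ hf₂ hφ₂ t x
    have a2 := wronskian_const θ φ₁ f₂ hφ₁ hf₂ t x
    rw [e3, e4] at a1 a2
    have a3 := hWt t
    simp only [γ, δ]
    field_simp
    linear_combination (-f₂ t) * a3 + φ₁ t * a1 + φ₂ t * a2
  have hdet : α * δ - β * γ = W⁻¹ := by
    have a3 := hWt x
    simp only [α, β, γ, δ]
    field_simp
    linear_combination a3
  have hφd : Differentiable ℝ φ₁ := hφ₁.1.differentiable (by simp)
  obtain ⟨K, hK1, hK2, hK3⟩ := mobius_extension R φ₁ φ₂ f₁ f₂ H α β γ δ hR hr1 hr2 hne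
    hφd.continuous
    (by
      intro t ht
      refine (hφd t).hasDerivAt.eventually_ne ?_
      intro h
      have := hWt t
      rw [ht, h] at this
      apply hW
      rw [← this]
      ring) hH hHd hHp
    (by
      intro z h0 h1
      have h2 := hHi z h0 h1
      have h3 : 0 < W * (H z).im := pos_of_mul_pos_left h2 h0.le
      rw [hdet]
      have h4 : W⁻¹ * (H z).im = (W⁻¹) ^ 2 * (W * (H z).im) := by field_simp
      rw [h4]
      positivity)
  obtain ⟨L, hL1, hL2, hL3, hL4⟩ := reflect_extension R (fun t => f₂ t / f₁ t) K hR hK1 hK2 hK3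
  obtain ⟨G, hG1, hG2, hG3, hG4, hG5⟩ :=
    strip_moments R hR x (fun t => f₂ t / f₁ t) L hL1 hL2 hL3 hL4
  have hr : 0 < R / Real.pi := div_pos hR Real.pi_pos
  obtain ⟨μ, hμ1, hμ2, hμ3⟩ := pick_moments (R / Real.pi) hr G hG1 hG2 hG3 hG4
  refine ⟨μ, hμ1, ?_, fun n hn => ?_⟩
  · rwa [inv_div] at hμ2
  · rw [← hμ3 n hn]
    have h1 := iteratedDeriv_re (R / Real.pi) G hG1 n 0 (by simpa using hr)
    rw [Complex.ofReal_zero] at h1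
    rw [← h1, SchR]
    refine Filter.EventuallyEq.iteratedDeriv_eq n ?_
    have hmem : {t : ℝ | |t| < R / Real.pi} ∈ nhds (0 : ℝ) :=
      (isOpen_lt continuous_abs continuous_const).mem_nhds (by simpa using hr)
    filter_upwards [hmem] with t ht
    exact (hG5 t ht).symm

end
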